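/- For every γ < 1 − d/4 there exists a constant C > 0 such that for all 0 ≤ t_0 < t ≤ T and all x ∈ D, ∫_{t_0}^t ∫_D G_{t−s}(x,y)² dy ds ≤ C (t − t_0)^γ. -/

import Mathlib

open MeasureTheory Real Filter

noncomputable section

/-- The spatial domain `[0, π]^d`. -/
def Dom (d : ℕ) : Set (Fin d → ℝ) := Set.Icc 0 (fun _ => Real.pi)

/-- Normalizing constants of the Neumann cosine basis. -/
def eps0 (j : ℕ) : ℝ := if j = 0 then Real.sqrt (1 / Real.pi) else Real.sqrt (2 / Real.pi)

/-- Neumann eigenfunctions of `-Δ` on `[0, π]^d`. -/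
def phi {d : ℕ} (k : Fin d → ℕ) (x : Fin d → ℝ) : ℝ :=
  ∏ i, eps0 (k i) * Real.cos ((k i : ℝ) * x i)

/-- `|k|² = Σ kᵢ²`. -/
def ksq {d : ℕ} (k : Fin d → ℕ) : ℝ := ∑ i, (k i : ℝ) ^ 2

/-- Green function of `∂ₜ + Δ²` with Neumann boundary conditions on `[0, π]^d`. -/
def green {d : ℕ} (t : ℝ) (x y : Fin d → ℝ) : ℝ :=
  ∑' k : Fin d → ℕ, Real.exp (-(ksq k ^ 2) * t) * phi k x * phi k y

/-- Laplacian in the `x`-variable of the Green function. -/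
def greenLap {d : ℕ} (t : ℝ) (x y : Fin d → ℝ) : ℝ :=
  -∑' k : Fin d → ℕ, ksq k * Real.exp (-(ksq k ^ 2) * t) * phi k x * phi k y

/-- The `L^p([0,π]^d)`-norm (real exponent `p`). -/
def LpNorm {d : ℕ} (p : ℝ) (u : (Fin d → ℝ) → ℝ) : ℝ :=
  (∫ x in Dom d, |u x| ^ p) ^ (1 / p)

/-!
By orthonormality of the eigenfunctions the Green function is a semigroup, so
`∫ G_τ(x, y)² dy = G_{2τ}(x, x)`. As the eigenfunctions are bounded by `1`, this is at most
`∑ₖ exp (-2|k|⁴τ)`; since `|k|⁴ ≥ ∑ᵢ kᵢ⁴`, that sum is dominated by a product of `d` one-dimensional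
sums, each of order `τ ^ (-1/4)` for small `τ`. The resulting bound `τ ^ (-d/4)` is integrable at
`0` exactly when `d < 4`, and its integral over `[0, t - t₀]` is of order `(t - t₀) ^ (1 - d/4)`.
-/

section BoundedOrthonormalSeries

variable {α ι : Type*} [MeasurableSpace α] [Countable ι] {μ : Measure α} {φ : ι → α → ℝ} {M : ℝ}
  {a b : ι → ℝ}

lemma integral_tsum_mul_mul (hφ : ∀ i, AEStronglyMeasurable (φ i) μ) (hM : ∀ i x, |φ i x| ≤ M)
    (ha : Summable a) {h : α → ℝ} (hh : Integrable h μ) :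
    ∫ x, (∑' i, a i * φ i x) * h x ∂μ = ∑' i, a i * ∫ x, φ i x * h x ∂μ := by
  have hint : ∀ i, Integrable (fun x => φ i x * h x) μ := fun i =>
    hh.bdd_mul (hφ i) (ae_of_all _ (hM i))
  have hnorm : ∀ i, ∫ x, ‖φ i x * h x‖ ∂μ ≤ M * ∫ x, ‖h x‖ ∂μ := fun i => by
    rw [← integral_const_mul]
    refine integral_mono (hint i).norm (hh.norm.const_mul M) fun x => ?_
    rw [norm_mul]
    exact mul_le_mul_of_nonneg_right (hM i x) (norm_nonneg _)
  have hsum : Summable fun i => ∫ x, ‖a i * (φ i x * h x)‖ ∂μ := by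
    refine (ha.abs.mul_right (M * ∫ x, ‖h x‖ ∂μ)).of_nonneg_of_le
      (fun i => integral_nonneg fun x => norm_nonneg _) fun i => ?_
    simp only [norm_mul (a i), integral_const_mul]
    exact mul_le_mul_of_nonneg_left (hnorm i) (norm_nonneg _)
  simp_rw [← tsum_mul_right, mul_assoc, ← integral_const_mul]
  exact (integral_tsum_of_summable_integral_norm (fun i => (hint i).const_mul _) hsum).symm

lemma integrable_tsum_mul [IsFiniteMeasure μ] (hφ : ∀ i, AEStronglyMeasurable (φ i) μ)
    (hM : ∀ i x, |φ i x| ≤ M) (ha : Summable a) : Integrable (fun x => ∑' i, a i * φ i x) μ := by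
  have hle : ∀ x i, ‖a i * φ i x‖ ≤ |a i| * M := fun x i => by
    rw [norm_mul]
    exact mul_le_mul_of_nonneg_left (hM i x) (norm_nonneg _)
  have hmeas : AEStronglyMeasurable (fun x => ∑' i, a i * φ i x) μ :=
    aestronglyMeasurable_of_tendsto_ae atTop
      (fun s => s.aestronglyMeasurable_fun_sum fun i _ => (hφ i).const_mul (a i))
      (ae_of_all _ fun x => ((ha.abs.mul_right M).of_norm_bounded (hle x)).hasSum)
  exact .of_bound hmeas (∑' i, |a i| * M)
    (ae_of_all _ fun x => tsum_of_norm_bounded (ha.abs.mul_right M).hasSum (hle x))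

lemma integral_tsum_mul_tsum_of_orthonormal [IsFiniteMeasure μ] [DecidableEq ι]
    (hφ : ∀ i, AEStronglyMeasurable (φ i) μ) (hM : ∀ i x, |φ i x| ≤ M)
    (horth : ∀ i j, ∫ x, φ i x * φ j x ∂μ = if i = j then 1 else 0)
    (ha : Summable a) (hb : Summable b) :
    ∫ x, (∑' i, a i * φ i x) * ∑' i, b i * φ i x ∂μ = ∑' i, a i * b i := by
  have hcoeff : ∀ i, ∫ x, φ i x * ∑' j, b j * φ j x ∂μ = b i := fun i => by
    have hint : Integrable (φ i) μ := .of_bound (hφ i) M (ae_of_all _ (hM i))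
    simp_rw [mul_comm (φ i _)]
    rw [integral_tsum_mul_mul hφ hM hb hint]
    simp only [horth, mul_ite, mul_one, mul_zero, tsum_ite_eq]
  simp_rw [integral_tsum_mul_mul hφ hM ha (integrable_tsum_mul hφ hM hb), hcoeff]

end BoundedOrthonormalSeries

section ExponentialSums

lemma sum_prod_le_prod_tsum {ι : Type*} [Fintype ι] {κ : ι → Type*} {g : ∀ i, κ i → ℝ}
    (hg : ∀ i j, 0 ≤ g i j) (hs : ∀ i, Summable (g i)) (u : Finset (∀ i, κ i)) :
    ∑ k ∈ u, ∏ i, g i (k i) ≤ ∏ i, ∑' j, g i j := by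
  classical
  have hu : u ⊆ Fintype.piFinset fun i => u.image fun k => k i := fun k hk =>
    Fintype.mem_piFinset.2 fun i => Finset.mem_image_of_mem (fun l => l i) hk
  calc ∑ k ∈ u, ∏ i, g i (k i)
      ≤ ∑ k ∈ Fintype.piFinset fun i => u.image fun k => k i, ∏ i, g i (k i) :=
        Finset.sum_le_sum_of_subset_of_nonneg hu fun k _ _ => Finset.prod_nonneg fun i _ => hg i _
    _ = ∏ i, ∑ j ∈ u.image fun k => k i, g i j := (Finset.prod_univ_sum _ g).symm
    _ ≤ ∏ i, ∑' j, g i j :=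
        Finset.prod_le_prod (fun i _ => Finset.sum_nonneg fun j _ => hg i j)
          fun i _ => (hs i).sum_le_tsum _ fun j _ => hg i j

variable {n : ℕ} {t : ℝ}

lemma exp_neg_pow_mul_le_geometric (hn : n ≠ 0) (ht : 0 < t) (j : ℕ) :
    exp (-(j ^ n) * t) ≤ exp 1 * exp (-t ^ (1 / n : ℝ)) ^ j := by
  have hroot : (t ^ (1 / n : ℝ)) ^ n = t := by rw [one_div, rpow_inv_natCast_pow ht.le hn]
  have hpow : ∀ u : ℝ, 0 ≤ u → u ≤ 1 + u ^ n := fun u hu => by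
    rcases le_total u 1 with h | h
    · linarith [pow_nonneg hu n]
    · linarith [le_self_pow₀ h hn]
  rw [← exp_nat_mul, ← exp_add, exp_le_exp]
  calc -(j ^ n : ℝ) * t = -(j * t ^ (1 / n : ℝ)) ^ n := by rw [mul_pow, hroot, neg_mul]
    _ ≤ 1 + j * -t ^ (1 / n : ℝ) := by linarith [hpow (j * t ^ (1 / n : ℝ)) (by positivity)]

lemma exp_neg_rpow_lt_one (ht : 0 < t) (p : ℝ) : exp (-t ^ p) < 1 :=
  exp_lt_one_iff.2 (neg_neg_of_pos (rpow_pos_of_pos ht p))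

lemma summable_exp_neg_pow_mul (hn : n ≠ 0) (ht : 0 < t) :
    Summable fun j : ℕ => exp (-(j ^ n) * t) :=
  .of_nonneg_of_le (fun _ => (exp_pos _).le) (exp_neg_pow_mul_le_geometric hn ht)
    ((summable_geometric_of_lt_one (exp_pos _).le (exp_neg_rpow_lt_one ht _)).mul_left _)

lemma inv_one_sub_exp_neg_le {r : ℝ} (hr : 0 < r) : (1 - exp (-r))⁻¹ ≤ 1 + r⁻¹ := by
  have hexp : exp (-r) ≤ (1 + r)⁻¹ := by
    rw [exp_neg]
    exact inv_anti₀ (by positivity) (by linarith [add_one_le_exp r])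
  have hinv : (1 + r⁻¹)⁻¹ = 1 - (1 + r)⁻¹ := by
    field_simp
    ring
  exact inv_le_of_inv_le₀ (by positivity) (by linarith)

lemma tsum_exp_neg_pow_mul_le (hn : n ≠ 0) (ht : 0 < t) :
    ∑' j : ℕ, exp (-(j ^ n) * t) ≤ exp 1 * (1 + t ^ (-(1 / n) : ℝ)) := by
  have hlt := exp_neg_rpow_lt_one ht (1 / n)
  calc ∑' j : ℕ, exp (-(j ^ n) * t) ≤ ∑' j : ℕ, exp 1 * exp (-t ^ (1 / n : ℝ)) ^ j :=
        (summable_exp_neg_pow_mul hn ht).tsum_le_tsum (exp_neg_pow_mul_le_geometric hn ht)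
          ((summable_geometric_of_lt_one (exp_pos _).le hlt).mul_left _)
    _ = exp 1 * (1 - exp (-t ^ (1 / n : ℝ)))⁻¹ := by
        rw [tsum_mul_left, tsum_geometric_of_lt_one (exp_pos _).le hlt]
    _ ≤ exp 1 * (1 + t ^ (-(1 / n) : ℝ)) := by
        rw [rpow_neg ht.le]
        gcongr
        exact inv_one_sub_exp_neg_le (rpow_pos_of_pos ht _)

end ExponentialSums

section PowerBounds

lemma rpow_le_rpow_sub_mul_rpow {x T β γ : ℝ} (hx : 0 < x) (hxT : x ≤ T) (hγ : γ ≤ β) :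
    x ^ β ≤ T ^ (β - γ) * x ^ γ := by
  rw [← sub_add_cancel β γ, rpow_add hx, add_sub_cancel_right]
  gcongr

lemma intervalIntegral_le_of_le_const_mul_rpow {f : ℝ → ℝ} {K α δ : ℝ} (hδ : 0 ≤ δ) (hα : -1 < α)
    (hf : ∀ τ ∈ Set.Ioc 0 δ, 0 ≤ f τ) (hfK : ∀ τ ∈ Set.Ioc 0 δ, f τ ≤ K * τ ^ α) :
    ∫ τ in 0..δ, f τ ≤ K * (δ ^ (α + 1) / (α + 1)) := by
  have hint : IntegrableOn (fun τ => K * τ ^ α) (Set.Ioc 0 δ) :=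
    ((intervalIntegral.intervalIntegrable_rpow' hα).const_mul K).1
  calc ∫ τ in 0..δ, f τ ≤ ∫ τ in 0..δ, K * τ ^ α := by
        rw [intervalIntegral.integral_of_le hδ, intervalIntegral.integral_of_le hδ]
        exact integral_mono_of_nonneg (ae_restrict_of_forall_mem measurableSet_Ioc hf) hint
          (ae_restrict_of_forall_mem measurableSet_Ioc hfK)
    _ = K * (δ ^ (α + 1) / (α + 1)) := by
        rw [intervalIntegral.integral_const_mul, integral_rpow (.inl hα),
          zero_rpow (by linarith), sub_zero]

end PowerBounds

section NeumannEigenfunctions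

lemma integral_cos_int_mul (n : ℤ) :
    ∫ z in (0 : ℝ)..π, cos (n * z) = if n = 0 then π else 0 := by
  split_ifs with hn
  · simp [hn]
  · rw [intervalIntegral.integral_comp_mul_left _ (Int.cast_ne_zero.2 hn), integral_cos]
    simp [sin_int_mul_pi]

lemma integral_cos_mul_cos (m n : ℕ) :
    ∫ z in (0 : ℝ)..π, cos (m * z) * cos (n * z) =
      ((if (m - n : ℤ) = 0 then π else 0) + if (m + n : ℤ) = 0 then π else 0) / 2 := by
  have hcos : ∀ z : ℝ, cos (m * z) * cos (n * z) =
      (cos ((m - n : ℤ) * z) + cos ((m + n : ℤ) * z)) / 2 := fun z => by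
    push_cast
    rw [sub_mul, add_mul, cos_sub, cos_add]
    ring
  simp_rw [hcos]
  rw [intervalIntegral.integral_div, intervalIntegral.integral_add
    (Continuous.intervalIntegrable (by fun_prop) _ _)
    (Continuous.intervalIntegrable (by fun_prop) _ _), integral_cos_int_mul, integral_cos_int_mul]

lemma integral_eps0_cos_mul_eps0_cos (m n : ℕ) :
    ∫ z in Set.Icc 0 π, eps0 m * cos (m * z) * (eps0 n * cos (n * z)) =
      if m = n then 1 else 0 := by
  have hπ := pi_pos
  simp_rw [mul_mul_mul_comm (eps0 m)]
  rw [integral_Icc_eq_integral_Ioc, ← intervalIntegral.integral_of_le hπ.le,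
    intervalIntegral.integral_const_mul, integral_cos_mul_cos]
  rcases eq_or_ne m n with rfl | hmn
  · rcases eq_or_ne m 0 with rfl | hm
    · simp [eps0, ← mul_inv, hπ.le, hπ.ne']
    · have hm2 : (m + m : ℤ) ≠ 0 := by omega
      have heps : eps0 m * eps0 m = 2 / π := by
        rw [eps0, if_neg hm, mul_self_sqrt (div_nonneg zero_le_two hπ.le)]
      simp [heps, hm2, hπ.ne']
  · have hsub : (m - n : ℤ) ≠ 0 := by omega
    have hadd : (m + n : ℤ) ≠ 0 := by omega
    simp [hmn, hsub, hadd]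

lemma restrict_Dom (d : ℕ) : (volume : Measure (Fin d → ℝ)).restrict (Dom d) =
    Measure.pi fun _ => (volume : Measure ℝ).restrict (Set.Icc 0 π) := by
  rw [Dom, ← Set.pi_univ_Icc, volume_pi, Measure.restrict_pi_pi]
  rfl

instance isFiniteMeasure_restrict_Dom (d : ℕ) :
    IsFiniteMeasure ((volume : Measure (Fin d → ℝ)).restrict (Dom d)) := by
  rw [restrict_Dom]
  infer_instance

variable {d : ℕ}

lemma integral_phi_mul_phi (k l : Fin d → ℕ) :
    ∫ y in Dom d, phi k y * phi l y = if k = l then 1 else 0 := by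
  simp_rw [phi, ← Finset.prod_mul_distrib, restrict_Dom]
  rw [integral_fintype_prod_eq_prod (fun i (z : ℝ) =>
    eps0 (k i) * cos (k i * z) * (eps0 (l i) * cos (l i * z)))]
  simp_rw [integral_eps0_cos_mul_eps0_cos, Finset.prod_ite_zero, Finset.prod_const_one,
    Finset.mem_univ, true_imp_iff, funext_iff]

lemma abs_eps0_le_one (j : ℕ) : |eps0 j| ≤ 1 := by
  have hπ := two_le_pi
  unfold eps0
  split_ifs <;> rw [abs_of_nonneg (sqrt_nonneg _), sqrt_le_one, div_le_one pi_pos] <;> linarith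

lemma abs_phi_le_one (k : Fin d → ℕ) (x : Fin d → ℝ) : |phi k x| ≤ 1 := by
  rw [phi, Finset.abs_prod]
  refine Finset.prod_le_one (fun i _ => abs_nonneg _) fun i _ => ?_
  rw [abs_mul]
  exact mul_le_one₀ (abs_eps0_le_one _) (abs_nonneg _) (abs_cos_le_one _)

lemma continuous_phi (k : Fin d → ℕ) : Continuous (phi k) := by
  unfold phi
  fun_prop

end NeumannEigenfunctions

section GreenFunction

variable {d : ℕ} {s t T : ℝ}

lemma sum_pow_four_le_ksq_sq (k : Fin d → ℕ) : ∑ i, (k i : ℝ) ^ 4 ≤ ksq k ^ 2 := by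
  have h := Finset.sum_sq_le_sq_sum_of_nonneg (s := Finset.univ)
    (f := fun i => (k i : ℝ) ^ 2) fun i _ => sq_nonneg _
  simpa only [ksq, ← pow_mul] using h

lemma sum_exp_neg_ksq_sq_le (ht : 0 < t) (u : Finset (Fin d → ℕ)) :
    ∑ k ∈ u, exp (-(ksq k ^ 2) * t) ≤ (exp 1 * (1 + t ^ (-(1 / 4) : ℝ))) ^ d := by
  have hfactor : ∀ k : Fin d → ℕ, exp (-(ksq k ^ 2) * t) ≤ ∏ i, exp (-(k i ^ 4) * t) :=
    fun k => by
      rw [← exp_sum, ← Finset.sum_mul, Finset.sum_neg_distrib]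
      gcongr
      exact sum_pow_four_le_ksq_sq k
  calc ∑ k ∈ u, exp (-(ksq k ^ 2) * t) ≤ ∑ k ∈ u, ∏ i, exp (-(k i ^ 4) * t) :=
        Finset.sum_le_sum fun k _ => hfactor k
    _ ≤ ∏ _i : Fin d, ∑' j : ℕ, exp (-(j ^ 4) * t) :=
        sum_prod_le_prod_tsum (fun _ _ => (exp_pos _).le)
          (fun _ => summable_exp_neg_pow_mul four_ne_zero ht) u
    _ ≤ (exp 1 * (1 + t ^ (-(1 / 4) : ℝ))) ^ d := by
        rw [Finset.prod_const, Finset.card_univ, Fintype.card_fin]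
        exact pow_le_pow_left₀ (tsum_nonneg fun _ => (exp_pos _).le)
          (mod_cast tsum_exp_neg_pow_mul_le four_ne_zero ht) d

lemma summable_exp_neg_ksq_sq (ht : 0 < t) :
    Summable fun k : Fin d → ℕ => exp (-(ksq k ^ 2) * t) :=
  summable_of_sum_le (fun _ => (exp_pos _).le) (sum_exp_neg_ksq_sq_le ht)

lemma abs_exp_mul_phi_le (t : ℝ) (k : Fin d → ℕ) (x : Fin d → ℝ) :
    |exp (-(ksq k ^ 2) * t) * phi k x| ≤ exp (-(ksq k ^ 2) * t) := by
  rw [abs_mul, abs_exp]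
  exact mul_le_of_le_one_right (exp_pos _).le (abs_phi_le_one k x)

lemma summable_exp_mul_phi (ht : 0 < t) (x : Fin d → ℝ) :
    Summable fun k : Fin d → ℕ => exp (-(ksq k ^ 2) * t) * phi k x :=
  (summable_exp_neg_ksq_sq ht).of_norm_bounded fun k => abs_exp_mul_phi_le t k x

lemma green_comm (t : ℝ) (x y : Fin d → ℝ) : green t x y = green t y x :=
  tsum_congr fun _ => mul_right_comm _ _ _

lemma integral_green_mul_green (hs : 0 < s) (ht : 0 < t) (x y : Fin d → ℝ) :
    ∫ z in Dom d, green s x z * green t z y = green (s + t) x y := by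
  simp_rw [green_comm t _ y, green]
  rw [integral_tsum_mul_tsum_of_orthonormal
    (fun k => (continuous_phi k).aestronglyMeasurable) abs_phi_le_one integral_phi_mul_phi
    (summable_exp_mul_phi hs x) (summable_exp_mul_phi ht y)]
  refine tsum_congr fun k => ?_
  rw [mul_add, exp_add]
  ring

lemma abs_green_le (ht : 0 < t) (x y : Fin d → ℝ) :
    |green t x y| ≤ (exp 1 * (1 + t ^ (-(1 / 4) : ℝ))) ^ d := by
  have hterm : ∀ k : Fin d → ℕ,
      ‖exp (-(ksq k ^ 2) * t) * phi k x * phi k y‖ ≤ exp (-(ksq k ^ 2) * t) := fun k => by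
    rw [norm_mul]
    exact (mul_le_of_le_one_right (norm_nonneg _) (abs_phi_le_one k y)).trans
      (abs_exp_mul_phi_le t k x)
  exact (tsum_of_norm_bounded (summable_exp_neg_ksq_sq ht).hasSum hterm).trans
    (tsum_le_of_sum_le (fun _ => (exp_pos _).le) (sum_exp_neg_ksq_sq_le ht))

lemma abs_green_le_rpow (ht : 0 < t) (htT : t ≤ T) (x y : Fin d → ℝ) :
    |green t x y| ≤ (exp 1 * (1 + T ^ (1 / 4 : ℝ))) ^ d * t ^ (-(d / 4) : ℝ) := by
  have hpow : t ^ (-(d / 4) : ℝ) = (t ^ (-(1 / 4) : ℝ)) ^ d := by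
    rw [← rpow_mul_natCast ht.le]
    ring_nf
  have hadd : 1 + t ^ (-(1 / 4) : ℝ) ≤ (1 + T ^ (1 / 4 : ℝ)) * t ^ (-(1 / 4) : ℝ) := by
    have hroot : t ^ (1 / 4 : ℝ) * t ^ (-(1 / 4) : ℝ) = 1 := by
      rw [← rpow_add ht, add_neg_cancel, rpow_zero]
    calc 1 + t ^ (-(1 / 4) : ℝ) = (1 + t ^ (1 / 4 : ℝ)) * t ^ (-(1 / 4) : ℝ) := by
          rw [add_mul, hroot, one_mul, add_comm]
      _ ≤ (1 + T ^ (1 / 4 : ℝ)) * t ^ (-(1 / 4) : ℝ) := by gcongr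
  rw [hpow, ← mul_pow, mul_assoc]
  exact (abs_green_le ht x y).trans (by gcongr)

lemma integral_green_sq_le_rpow (ht : 0 < t) (htT : t ≤ T) (x : Fin d → ℝ) :
    ∫ y in Dom d, green t x y ^ 2 ≤
      (exp 1 * (1 + (2 * T) ^ (1 / 4 : ℝ))) ^ d * t ^ (-(d / 4) : ℝ) := by
  have hT : 0 < T := ht.trans_le htT
  calc ∫ y in Dom d, green t x y ^ 2 = green (2 * t) x x := by
        simp_rw [sq, two_mul, ← integral_green_mul_green ht ht, green_comm t _ x]
    _ ≤ (exp 1 * (1 + (2 * T) ^ (1 / 4 : ℝ))) ^ d * (2 * t) ^ (-(d / 4) : ℝ) :=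
        (le_abs_self _).trans (abs_green_le_rpow (by positivity) (by gcongr) x x)
    _ ≤ (exp 1 * (1 + (2 * T) ^ (1 / 4 : ℝ))) ^ d * t ^ (-(d / 4) : ℝ) := by
        gcongr ?_ * ?_
        exact rpow_le_rpow_of_nonpos ht (by linarith) (neg_nonpos.2 (by positivity))

end GreenFunction

theorem green_sq_time_integral_bound_general (d : ℕ) (hd : d < 4) (T : ℝ) (hT : 0 < T) (γ : ℝ)
    (hγ : γ ≤ 1 - (d : ℝ) / 4) :
    ∃ C > 0, ∀ t₀ t : ℝ, t₀ < t → t - t₀ ≤ T → ∀ x : Fin d → ℝ,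
      (∫ s in t₀..t, ∫ y in Dom d, (green (t - s) x y) ^ 2) ≤ C * (t - t₀) ^ γ := by
  have hd4 : (d : ℝ) < 4 := mod_cast hd
  set K : ℝ := (exp 1 * (1 + (2 * T) ^ (1 / 4 : ℝ))) ^ d
  set β : ℝ := 1 - d / 4 with hβ
  have hβ0 : 0 < β := by linarith
  refine ⟨K / β * T ^ (β - γ), by positivity, fun t₀ t ht htT x => ?_⟩
  have hδ : 0 < t - t₀ := sub_pos.2 ht
  calc ∫ s in t₀..t, ∫ y in Dom d, green (t - s) x y ^ 2
      = ∫ τ in 0..t - t₀, ∫ y in Dom d, green τ x y ^ 2 := by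
        rw [intervalIntegral.integral_comp_sub_left (fun τ => ∫ y in Dom d, green τ x y ^ 2),
          sub_self]
    _ ≤ K * ((t - t₀) ^ (-(d / 4) + 1 : ℝ) / (-(d / 4) + 1)) :=
        intervalIntegral_le_of_le_const_mul_rpow hδ.le (by linarith)
          (fun τ _ => integral_nonneg fun y => sq_nonneg _)
          fun τ hτ => integral_green_sq_le_rpow hτ.1 (hτ.2.trans htT) x
    _ = K / β * (t - t₀) ^ β := by rw [neg_add_eq_sub, ← hβ, div_mul_eq_mul_div, mul_div_assoc]
    _ ≤ K / β * T ^ (β - γ) * (t - t₀) ^ γ := by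
        rw [mul_assoc]
        gcongr
        exact rpow_le_rpow_sub_mul_rpow hδ htT hγ

/-- Lemma 3.1(2): for `γ < 1 - d/4` there is `C > 0` with
`∫_{t₀}^t ∫_D G_{t-s}(x,y)² dy ds ≤ C (t - t₀)^γ`. -/
theorem green_sq_time_integral_bound (d : ℕ) (hd : d ∈ ({1, 2, 3} : Set ℕ)) (T : ℝ)
    (hT : 0 < T) (γ : ℝ) (hγ : γ < 1 - (d : ℝ) / 4) :
    ∃ C > 0, ∀ t₀ t : ℝ, 0 ≤ t₀ → t₀ < t → t ≤ T → ∀ x ∈ Dom d,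
      (∫ s in t₀..t, ∫ y in Dom d, (green (t - s) x y) ^ 2) ≤ C * (t - t₀) ^ γ := by
  have hd4 : d < 4 := by rcases hd with rfl | rfl | rfl <;> norm_num
  obtain ⟨C, hC, hbound⟩ := green_sq_time_integral_bound_general d hd4 T hT γ hγ.le
  exact ⟨C, hC, fun t₀ t ht₀ ht htT x _ => hbound t₀ t ht (by linarith) x⟩
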